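/- Let K be a commutative ℚ-algebra, q ≥ 2 an integer, and φ, β ∈ K. Define S_φ(n, m) = ∏_i C(φ, n_i − m_i), the finite product taken over the base-q digit positions, where n = Σ_i n_i q^i and m = Σ_i m_i q^i (0 ≤ n_i, m_i < q). Then: (a) S_1(n, m) = B_q(n, m) for all n, m; (b) for all m ≤ n, Σ_{k=m}^{n} S_φ(n, k) · S_β(k, m) = S_{φ+β}(n, m). -/

import Mathlib

/-- The generalized binomial coefficient `C(φ,k) = binom(φ+k−1, k)
= φ(φ+1)⋯(φ+k−1)/k!` for `k ≥ 0`, and `0` for `k < 0`. -/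
noncomputable def genC {K : Type*} [CommRing K] [Algebra ℚ K] (φ : K) (k : ℤ) : K :=
  if 0 ≤ k then
    (∏ i ∈ Finset.range k.toNat, (φ + (i : K))) *
      algebraMap ℚ K (1 / (k.toNat.factorial : ℚ))
  else 0

open Classical in
/-- The entries of the fractal zero generalized Pascal matrix `₍[0,q]₎P`, as
elements of `K`. -/
noncomputable def BqK (K : Type*) [CommRing K] [Algebra ℚ K] (q n m : ℕ) : K :=
  if m ≤ n ∧ ∀ k : ℕ, 1 ≤ k → m % q ^ k ≤ n % q ^ k then 1 else 0

/-- The matrix realizing the `φ`-th power of `₍[0,q]₎P`: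
`S_φ(n,m) = ∏ᵢ C(φ, nᵢ − mᵢ)` over the base-`q` digit positions (the range
`i ≤ n + m` captures all nonzero digits). -/
noncomputable def Spow {K : Type*} [CommRing K] [Algebra ℚ K] (q : ℕ) (φ : K)
    (n m : ℕ) : K :=
  ∏ i ∈ Finset.range (n + m + 1),
    genC φ ((n / q ^ i % q : ℕ) - (m / q ^ i % q : ℕ) : ℤ)

noncomputable def cN {K : Type*} [CommRing K] [Algebra ℚ K] (φ : K) (n : ℕ) : K :=
  (∏ i ∈ Finset.range n, (φ + (i : K))) * algebraMap ℚ K (1 / (n.factorial : ℚ))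

theorem inv_cast_mul (K : Type*) [CommRing K] [Algebra ℚ K] (n : ℕ) :
    algebraMap ℚ K (1 / ((n : ℚ) + 1)) * ((n : K) + 1) = 1 := by
  have h : ((n : K) + 1) = algebraMap ℚ K ((n : ℚ) + 1) := by simp
  rw [h, ← map_mul, one_div, inv_mul_cancel₀ (by positivity), map_one]

theorem cN_zero {K : Type*} [CommRing K] [Algebra ℚ K] (φ : K) : cN φ 0 = 1 := by
  simp [cN]

theorem cN_succ {K : Type*} [CommRing K] [Algebra ℚ K] (φ : K) (n : ℕ) :
    ((n : K) + 1) * cN φ (n + 1) = (φ + n) * cN φ n := by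
  unfold cN
  rw [Finset.prod_range_succ, Nat.factorial_succ]
  have h : algebraMap ℚ K (1 / (((n + 1) * n.factorial : ℕ) : ℚ))
      = algebraMap ℚ K (1 / ((n : ℚ) + 1)) * algebraMap ℚ K (1 / (n.factorial : ℚ)) := by
    rw [← map_mul]; congr 1; push_cast; rw [one_div_mul_one_div]
  rw [h]
  linear_combination (∏ i ∈ Finset.range n, (φ + (i : K))) * (φ + n) *
    algebraMap ℚ K (1 / (n.factorial : ℚ)) * inv_cast_mul K n

theorem cN_vander {K : Type*} [CommRing K] [Algebra ℚ K] (φ β : K) (n : ℕ) :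
    ∑ p ∈ Finset.HasAntidiagonal.antidiagonal n, cN φ p.1 * cN β p.2 = cN (φ + β) n := by
  induction n with
  | zero => simp [cN_zero]
  | succ n ih =>
    have key : ((n : K) + 1) * ∑ p ∈ Finset.HasAntidiagonal.antidiagonal (n + 1), cN φ p.1 * cN β p.2
        = ((n : K) + 1) * cN (φ + β) (n + 1) := by
      rw [cN_succ, ← ih, Finset.mul_sum, Finset.mul_sum]
      have h1 : ∑ p ∈ Finset.HasAntidiagonal.antidiagonal (n + 1), ((n : K) + 1) * (cN φ p.1 * cN β p.2)
          = ∑ p ∈ Finset.HasAntidiagonal.antidiagonal (n + 1), (p.1 : K) * (cN φ p.1 * cN β p.2)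
          + ∑ p ∈ Finset.HasAntidiagonal.antidiagonal (n + 1), (p.2 : K) * (cN φ p.1 * cN β p.2) := by
        rw [← Finset.sum_add_distrib]
        refine Finset.sum_congr rfl fun p hp => ?_
        have : ((p.1 + p.2 : ℕ) : K) = ((n + 1 : ℕ) : K) := by
          rw [Finset.HasAntidiagonal.mem_antidiagonal.1 hp]
        push_cast at this
        rw [← this]; ring
      rw [h1, Finset.Nat.sum_antidiagonal_succ, Finset.Nat.sum_antidiagonal_succ']
      simp only [Nat.cast_zero, zero_mul, zero_add, add_zero]
      rw [← Finset.sum_add_distrib]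
      refine Finset.sum_congr rfl fun p hp => ?_
      have : ((p.1 + p.2 : ℕ) : K) = (n : K) := by
        rw [Finset.HasAntidiagonal.mem_antidiagonal.1 hp]
      push_cast at this ⊢
      rw [← this]
      linear_combination cN β p.2 * cN_succ φ p.1 + cN φ p.1 * cN_succ β p.2
    have h2 := inv_cast_mul K n
    have := congrArg (fun x => algebraMap ℚ K (1 / ((n : ℚ) + 1)) * x) key
    simp only [← mul_assoc, h2, one_mul] at this
    exact this

theorem genC_neg {K : Type*} [CommRing K] [Algebra ℚ K] (φ : K) {a b : ℕ} (h : a < b) :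
    genC φ ((a : ℤ) - b) = 0 := by
  unfold genC; rw [if_neg (by omega)]

theorem genC_add {K : Type*} [CommRing K] [Algebra ℚ K] (φ : K) {a b c : ℕ} (h : a = b + c) :
    genC φ ((a : ℤ) - b) = cN φ c := by
  unfold genC cN
  have : ((a : ℤ) - b).toNat = c := by omega
  rw [if_pos (by omega), this]

theorem genC_self {K : Type*} [CommRing K] [Algebra ℚ K] (φ : K) (a : ℕ) :
    genC φ ((a : ℤ) - a) = 1 := by
  rw [genC_add φ (a := a) (b := a) (c := 0) (by omega), cN_zero]

theorem cN_one {K : Type*} [CommRing K] [Algebra ℚ K] (n : ℕ) : cN (1 : K) n = 1 := by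
  induction n with
  | zero => exact cN_zero _
  | succ n ih =>
    have h := cN_succ (1 : K) n
    have h2 := inv_cast_mul K n
    rw [ih] at h
    linear_combination algebraMap ℚ K (1 / ((n : ℚ) + 1)) * h + (1 - cN (1 : K) (n + 1)) * h2

theorem genC_vander {K : Type*} [CommRing K] [Algebra ℚ K] (φ β : K) (q a c : ℕ) (ha : a < q) :
    ∑ b ∈ Finset.range q, genC φ ((a : ℤ) - b) * genC β ((b : ℤ) - c)
      = genC (φ + β) ((a : ℤ) - c) := by
  rcases lt_or_ge a c with h | h
  · rw [genC_neg _ h]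
    refine Finset.sum_eq_zero fun b _ => ?_
    rcases lt_or_ge a b with h' | h'
    · rw [genC_neg _ h', zero_mul]
    · rw [genC_neg β (lt_of_le_of_lt h' h), mul_zero]
  · obtain ⟨d, rfl⟩ := Nat.exists_eq_add_of_le h
    rw [genC_add _ rfl, ← cN_vander]
    symm
    refine Finset.sum_of_injOn (fun p => c + p.2) ?_ ?_ ?_ ?_
    · rintro ⟨i, j⟩ h1 ⟨i', j'⟩ h2 h3
      simp at h1 h2 h3 ⊢
      omega
    · rintro ⟨i, j⟩ h1
      simp at h1 ⊢
      omega
    · intro b hb hb'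
      rcases lt_or_ge b c with h' | h'
      · rw [genC_neg β h', mul_zero]
      · rcases lt_or_ge (c + d) b with h4 | h4
        · rw [genC_neg _ h4, zero_mul]
        · exfalso; apply hb'
          refine ⟨(c + d - b, b - c), ?_, ?_⟩
          · simp; omega
          · simp; omega
    · rintro ⟨i, j⟩ h1
      have h1 := Finset.HasAntidiagonal.mem_antidiagonal.1 h1
      simp only at h1 ⊢
      rw [genC_add φ (c := i) (by omega), genC_add β (c := j) rfl]

noncomputable def TN {K : Type*} [CommRing K] [Algebra ℚ K] (q : ℕ) (N : ℕ) (φ : K)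
    (n m : ℕ) : K :=
  ∏ i ∈ Finset.range N, genC φ ((n / q ^ i % q : ℕ) - (m / q ^ i % q : ℕ) : ℤ)

theorem TN_succ {K : Type*} [CommRing K] [Algebra ℚ K] (q : ℕ) (N : ℕ) (φ : K) (n m : ℕ) :
    TN q (N + 1) φ n m = genC φ ((n % q : ℕ) - (m % q : ℕ) : ℤ) * TN q N φ (n / q) (m / q) := by
  unfold TN
  rw [Finset.prod_range_succ', mul_comm]
  simp only [pow_zero, Nat.div_one, pow_succ', Nat.div_div_eq_div_mul]

theorem TN_mono {K : Type*} [CommRing K] [Algebra ℚ K] (q : ℕ) (hq : 2 ≤ q) (φ : K) (n m N N' : ℕ)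
    (h : N ≤ N') (hn : n < q ^ N) (hm : m < q ^ N) : TN q N φ n m = TN q N' φ n m := by
  unfold TN
  refine Finset.prod_subset (by simpa using h) fun i _ hi => ?_
  have hi : N ≤ i := by simpa using hi
  have := Nat.pow_le_pow_right (by omega : 0 < q) hi
  rw [Nat.div_eq_of_lt (by omega), Nat.div_eq_of_lt (by omega), genC_self]

theorem Spow_eq {K : Type*} [CommRing K] [Algebra ℚ K] (q : ℕ) (hq : 2 ≤ q) (φ : K) (n m N : ℕ)
    (hn : n < q ^ N) (hm : m < q ^ N) : Spow q φ n m = TN q N φ n m := by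
  have h : n + m + 1 < q ^ (n + m + 1) := Nat.lt_pow_self (by omega)
  have e : Spow q φ n m = TN q (n + m + 1) φ n m := rfl
  rw [e]
  rcases le_total N (n + m + 1) with h' | h'
  · exact (TN_mono q hq φ n m _ _ h' hn hm).symm
  · exact TN_mono q hq φ n m _ _ h' (by omega) (by omega)

theorem TN_zero {K : Type*} [CommRing K] [Algebra ℚ K] (q : ℕ) (hq : 2 ≤ q) (φ : K) (N : ℕ) :
    ∀ n m : ℕ, n < m → m < q ^ N → TN q N φ n m = 0 := by
  induction N with
  | zero => intro n m h h'; simp at h'; omega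
  | succ N ih =>
    intro n m h h'
    rw [TN_succ]
    rcases lt_or_ge (n % q) (m % q) with h1 | h1
    · rw [genC_neg _ h1, zero_mul]
    · rw [ih, mul_zero]
      · by_contra h2
        have h2 : m / q ≤ n / q := by omega
        have := Nat.mul_le_mul_left q h2
        have := Nat.div_add_mod n q
        have := Nat.div_add_mod m q
        omega
      · rw [Nat.div_lt_iff_lt_mul (by omega), ← pow_succ]; exact h'

theorem sum_range_split {K : Type*} [CommRing K] (q M : ℕ) (hq : 0 < q) (f : ℕ → K) :
    ∑ k ∈ Finset.range (q * M), f k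
      = ∑ a ∈ Finset.range M, ∑ b ∈ Finset.range q, f (q * a + b) := by
  induction M with
  | zero => simp
  | succ M ih => rw [Finset.sum_range_succ, ← ih, Nat.mul_succ, Finset.sum_range_add]

theorem TN_mul {K : Type*} [CommRing K] [Algebra ℚ K] (q : ℕ) (hq : 2 ≤ q) (φ β : K) (N : ℕ) :
    ∀ n m : ℕ, ∑ k ∈ Finset.range (q ^ N), TN q N φ n k * TN q N β k m
      = TN q N (φ + β) n m := by
  induction N with
  | zero => intro n m; simp [TN]
  | succ N ih =>
    intro n m
    rw [pow_succ', sum_range_split q _ (by omega), TN_succ, ← ih,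
      ← genC_vander φ β q _ _ (Nat.mod_lt n (by omega)), Finset.sum_mul_sum, Finset.sum_comm]
    refine Finset.sum_congr rfl fun b hb => Finset.sum_congr rfl fun a _ => ?_
    have hb : b < q := by simpa using hb
    rw [TN_succ, TN_succ, Nat.mul_add_mod, Nat.mod_eq_of_lt hb, Nat.mul_add_div (by omega),
      Nat.div_eq_of_lt hb, add_zero]
    ring

theorem dig_iff (q : ℕ) (hq : 2 ≤ q) (n m N : ℕ) (hn : n < q ^ N) (hm : m < q ^ N) :
    (∀ i < N, m / q ^ i % q ≤ n / q ^ i % q) ↔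
      (m ≤ n ∧ ∀ k : ℕ, 1 ≤ k → m % q ^ k ≤ n % q ^ k) := by
  constructor
  · intro h
    have h' : ∀ i, m / q ^ i % q ≤ n / q ^ i % q := by
      intro i
      rcases lt_or_ge i N with hi | hi
      · exact h i hi
      · have := Nat.pow_le_pow_right (by omega : 0 < q) hi
        rw [Nat.div_eq_of_lt (by omega : m < q ^ i)]; simp
    have h2 : ∀ k, m % q ^ k ≤ n % q ^ k := by
      intro k
      induction k with
      | zero => simp [Nat.mod_one]
      | succ k ih =>
        rw [Nat.mod_pow_succ, Nat.mod_pow_succ]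
        exact Nat.add_le_add ih (Nat.mul_le_mul_left _ (h' k))
    refine ⟨?_, fun k _ => h2 k⟩
    have := h2 N
    rwa [Nat.mod_eq_of_lt hn, Nat.mod_eq_of_lt hm] at this
  · rintro ⟨-, h⟩ i -
    have := Nat.div_le_div_right (c := q ^ i) (h (i + 1) (by omega))
    rwa [pow_succ, Nat.mod_mul_right_div_self, Nat.mod_mul_right_div_self] at this

theorem Spow_one_and_mul {K : Type*} [CommRing K] [Algebra ℚ K]
    (q : ℕ) (hq : 2 ≤ q) (φ β : K) :
    (∀ n m : ℕ, Spow q (1 : K) n m = BqK K q n m) ∧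
    (∀ n m : ℕ, m ≤ n →
      ∑ k ∈ Finset.Icc m n, Spow q φ n k * Spow q β k m = Spow q (φ + β) n m) := by
  constructor
  · intro n m
    have h : n + m + 1 < q ^ (n + m + 1) := Nat.lt_pow_self (by omega)
    have key := dig_iff q hq n m (n + m + 1) (by omega) (by omega)
    unfold BqK Spow
    split_ifs with hc
    · refine Finset.prod_eq_one fun i hi => ?_
      obtain ⟨d, hd⟩ := Nat.exists_eq_add_of_le (key.2 hc i (by simpa using hi))
      rw [genC_add _ hd, cN_one]
    · rw [← key] at hc
      push Not at hc
      obtain ⟨i, hi, hlt⟩ := hc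
      exact Finset.prod_eq_zero (i := i) (by simpa using hi) (genC_neg _ hlt)
  · intro n m hmn
    have h : n < q ^ n := Nat.lt_pow_self (by omega)
    rw [Spow_eq q hq _ n m n h (by omega), ← TN_mul q hq]
    have hsub : Finset.Icc m n ⊆ Finset.range (q ^ n) := by
      intro k hk
      simp at hk ⊢
      omega
    rw [← Finset.sum_subset hsub]
    · refine Finset.sum_congr rfl fun k hk => ?_
      simp at hk
      rw [Spow_eq q hq _ n k n h (by omega), Spow_eq q hq _ k m n (by omega) (by omega)]
    · intro k hk hk'
      simp at hk hk'
      rcases lt_or_ge k m with h1 | h1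
      · rw [TN_zero q hq β n k m h1 (by omega), mul_zero]
      · rw [TN_zero q hq φ n n k (hk' h1) hk, zero_mul]
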